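/- Let C, c > 0 and let g : (0, ∞) → ℂ be measurable with |g(t)| ≤ C e^{−c/t} for all t > 0. If ∫₀^∞ g(t) t^{−(k+1)} dt = 0 for every integer k ≥ 1, then g(t) = 0 for almost every t ∈ (0, ∞). -/

import Mathlib

open MeasureTheory Set

/-!
With `X t = 1/t`, the hypothesis says that the complex measure `g(t) t⁻² dt` on `(0, ∞)` integrates
every power of `X` to zero. Its real and imaginary parts are treated separately. The positive and
negative parts of a real density `u(t) / t²` with `|u(t)| ≤ C e^{-c/t}` give two finite measures
with the same moments of `X`, and `e^{aX}` is integrable for both whenever `a < c`. Hence their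
complex moment generating functions `z ↦ ∫ e^{zX}` are analytic on a vertical strip around `0` and
have the same derivatives at `0`, so they coincide on the strip, in particular on the imaginary
axis (`map_eq_of_moments_eq`). The two laws of `X` thus have the same characteristic function, and
`X` is invertible, so the two measures, and then their densities, agree.
-/

open ProbabilityTheory in
/-- Moment determinacy: if `X` has exponential moments near `0` under two finite measures, then its
law is determined by its moments. -/
lemma map_eq_of_moments_eq {Ω : Type*} [MeasurableSpace Ω] {X : Ω → ℝ} {μ ν : Measure Ω}
    [IsFiniteMeasure μ] [IsFiniteMeasure ν] (hX : Measurable X)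
    (hμ : 0 ∈ interior (integrableExpSet X μ)) (hν : 0 ∈ interior (integrableExpSet X ν))
    (h : ∀ n : ℕ, ∫ ω, X ω ^ n ∂μ = ∫ ω, X ω ^ n ∂ν) : μ.map X = ν.map X := by
  let S : Set ℝ := interior (integrableExpSet X μ) ∩ interior (integrableExpSet X ν)
  let U : Set ℂ := {z | z.re ∈ S}
  have hμU : AnalyticOnNhd ℂ (complexMGF X μ) U := fun z hz ↦ analyticAt_complexMGF hz.1
  have hνU : AnalyticOnNhd ℂ (complexMGF X ν) U := fun z hz ↦ analyticAt_complexMGF hz.2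
  have hU : IsPreconnected U :=
    ((convex_integrableExpSet.interior.inter convex_integrableExpSet.interior).linear_preimage
      Complex.reLm).isPreconnected
  have h0 : (0 : ℂ) ∈ U := ⟨by simpa using hμ, by simpa using hν⟩
  have hder (n : ℕ) : iteratedDeriv n (complexMGF X μ) 0 = iteratedDeriv n (complexMGF X ν) 0 := by
    rw [iteratedDeriv_complexMGF h0.1, iteratedDeriv_complexMGF h0.2]
    have := congrArg (fun x : ℝ ↦ (x : ℂ)) (h n)
    simp only [← integral_complex_ofReal] at this
    simpa using this
  -- Both functions have the same Taylor series at `0`.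
  have hev : complexMGF X μ =ᶠ[nhds 0] complexMGF X ν := by
    have h1 := (hμU 0 h0).hasFPowerSeriesAt
    have h2 := (hνU 0 h0).hasFPowerSeriesAt
    simp only [hder] at h1
    filter_upwards [h1.eventually_hasSum_sub, h2.eventually_hasSum_sub] with z hz1 hz2
    exact hz1.unique hz2
  have heq := hμU.eqOn_of_preconnected_of_eventuallyEq hνU hU h0 hev
  refine Measure.ext_of_charFun (funext fun t ↦ ?_)
  rw [← complexMGF_mul_I hX.aemeasurable, ← complexMGF_mul_I hX.aemeasurable]
  exact heq ⟨by simpa using hμ, by simpa using hν⟩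

/-- The substitution `x = 1/t` turns this into the convergence of `∫₀^∞ xⁿ e^{-bx} dx`. -/
lemma integrableOn_inv_pow_mul_exp (b : ℝ) (hb : 0 < b) (n : ℕ) :
    IntegrableOn (fun t : ℝ ↦ Real.exp (-b / t) / t ^ (n + 2)) (Ioi 0) := by
  have h1 : IntegrableOn (fun x : ℝ ↦ x ^ (n : ℝ) * Real.exp (-b * x ^ (1 : ℝ))) (Ioi 0) :=
    integrableOn_rpow_mul_exp_neg_mul_rpow (by linarith [n.cast_nonneg (α := ℝ)]) one_pos hb
  have h2 := (integrableOn_Ioi_comp_rpow_iff _ (p := -1) (by norm_num)).2 h1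
  refine h2.congr_fun (fun t (ht : 0 < t) ↦ ?_) measurableSet_Ioi
  have h3 : t ^ ((-1 : ℝ) - 1) = (t ^ 2)⁻¹ := by
    rw [show ((-1 : ℝ) - 1) = -((2 : ℕ) : ℝ) by norm_num, Real.rpow_neg ht.le, Real.rpow_natCast]
  simp only [h3, Real.rpow_neg_one, Real.rpow_one, Real.rpow_natCast, smul_eq_mul, abs_neg, abs_one,
    one_mul, div_eq_mul_inv, inv_pow, pow_add, mul_inv]
  ring

/-- The positive part of the measure `u(t) t⁻² dt` on `(0, ∞)`. -/
noncomputable def posPartMeasure (u : ℝ → ℝ) : Measure ℝ :=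
  (volume.restrict (Ioi 0)).withDensity fun t ↦ (Real.toNNReal (u t / t ^ 2) : ENNReal)

lemma integrable_exp_posPartMeasure {C c : ℝ} {u : ℝ → ℝ} (hu : Measurable u)
    (hb : ∀ t : ℝ, 0 < t → |u t| ≤ C * Real.exp (-c / t)) {a : ℝ} (ha : a < c) :
    Integrable (fun t : ℝ ↦ Real.exp (a * t⁻¹)) (posPartMeasure u) := by
  have hm : Measurable fun t ↦ Real.toNNReal (u t / t ^ 2) := by fun_prop
  rw [posPartMeasure, integrable_withDensity_iff_integrable_smul hm]
  have hi := (integrableOn_inv_pow_mul_exp (c - a) (sub_pos.2 ha) 0).const_mul C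
  refine hi.mono' (by fun_prop) ?_
  filter_upwards [ae_restrict_mem measurableSet_Ioi] with t (ht : 0 < t)
  have h1 : ((u t / t ^ 2).toNNReal : ℝ) ≤ C * Real.exp (-c / t) / t ^ 2 := by
    rw [Real.coe_toNNReal']
    refine max_le ?_ ?_
    · gcongr
      exact (le_abs_self _).trans (hb t ht)
    · exact div_nonneg ((abs_nonneg _).trans (hb t ht)) (by positivity)
  rw [NNReal.smul_def, smul_eq_mul, Real.norm_of_nonneg (by positivity)]
  calc _ ≤ C * Real.exp (-c / t) / t ^ 2 * Real.exp (a * t⁻¹) := by gcongr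
    _ = C * (Real.exp (-c / t) * Real.exp (a * t⁻¹)) / t ^ 2 := by ring
    _ = _ := by
      rw [← Real.exp_add, show -c / t + a * t⁻¹ = -(c - a) / t by ring]
      ring

open ProbabilityTheory in
/-- The real case: `posPartMeasure u` and `posPartMeasure (-u)` are the positive and negative parts
of `u(t) t⁻² dt`, and all moments of `1/t` agree under them. -/
lemma ae_eq_zero_of_real {C c : ℝ} (hc : 0 < c) {u : ℝ → ℝ} (hu : Measurable u)
    (hb : ∀ t : ℝ, 0 < t → |u t| ≤ C * Real.exp (-c / t))
    (hvan : ∀ n : ℕ, ∫ t in Ioi (0 : ℝ), u t / t ^ (n + 2) = 0) :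
    ∀ᵐ t ∂(volume.restrict (Ioi (0 : ℝ))), u t = 0 := by
  have hX : Measurable fun t : ℝ ↦ t⁻¹ := measurable_inv
  have hpos : ∀ v : ℝ → ℝ, Measurable v → (∀ t : ℝ, 0 < t → |v t| ≤ C * Real.exp (-c / t)) →
      IsFiniteMeasure (posPartMeasure v) ∧
        0 ∈ interior (integrableExpSet (fun t : ℝ ↦ t⁻¹) (posPartMeasure v)) := by
    intro v hv hvb
    constructor
    · have h := integrable_exp_posPartMeasure hv hvb hc
      simp only [zero_mul, Real.exp_zero] at h
      exact (integrable_const_iff_isFiniteMeasure one_ne_zero).1 h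
    · rw [mem_interior_iff_mem_nhds]
      filter_upwards [Iio_mem_nhds hc] with a ha
      exact integrable_exp_posPartMeasure hv hvb ha
  have hb' : ∀ t : ℝ, 0 < t → |(-u) t| ≤ C * Real.exp (-c / t) := by simpa using hb
  obtain ⟨hf1, hi1⟩ := hpos u hu hb
  obtain ⟨hf2, hi2⟩ := hpos (-u) hu.neg hb'
  have hm1 : Measurable fun t ↦ Real.toNNReal (u t / t ^ 2) := by fun_prop
  have hm2 : Measurable fun t ↦ Real.toNNReal ((-u) t / t ^ 2) := by fun_prop
  have hmap := map_eq_of_moments_eq hX hi1 hi2 fun n ↦ by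
    have e1 := integrable_pow_of_mem_interior_integrableExpSet hi1 n
    have e2 := integrable_pow_of_mem_interior_integrableExpSet hi2 n
    rw [posPartMeasure, integrable_withDensity_iff_integrable_smul hm1] at e1
    rw [posPartMeasure, integrable_withDensity_iff_integrable_smul hm2] at e2
    rw [posPartMeasure, posPartMeasure, integral_withDensity_eq_integral_smul hm1,
      integral_withDensity_eq_integral_smul hm2, ← sub_eq_zero, ← integral_sub e1 e2]
    refine (integral_congr_ae (ae_of_all _ fun t ↦ ?_)).trans (hvan n)
    simp only [NNReal.smul_def, smul_eq_mul, ← sub_mul, Pi.neg_apply, neg_div, Real.coe_toNNReal']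
    rw [max_zero_sub_max_neg_zero_eq_self]
    simp only [div_eq_mul_inv, inv_pow, pow_add, mul_inv]
    ring
  -- Inversion is an involution (with `0⁻¹ = 0`), so pushing forward once more recovers the measures.
  have hμ : posPartMeasure u = posPartMeasure (-u) := by
    have := congrArg (Measure.map fun t : ℝ ↦ t⁻¹) hmap
    simpa [Measure.map_map hX hX, Function.comp_def] using this
  have hfin : ∫⁻ t, (Real.toNNReal (u t / t ^ 2) : ENNReal) ∂(volume.restrict (Ioi 0)) ≠ ⊤ := by
    rw [← setLIntegral_univ, ← withDensity_apply _ MeasurableSet.univ]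
    exact (measure_lt_top (posPartMeasure u) univ).ne
  have hae := (withDensity_eq_iff (by fun_prop) (by fun_prop) hfin).1 hμ
  filter_upwards [hae, ae_restrict_mem measurableSet_Ioi] with t h (ht : 0 < t)
  have h' := congrArg NNReal.toReal (ENNReal.coe_injective h)
  simp only [Real.coe_toNNReal', Pi.neg_apply, neg_div] at h'
  rw [← sub_eq_zero, max_zero_sub_max_neg_zero_eq_self] at h'
  exact (div_eq_zero_iff.1 h').resolve_right (by positivity)

/-- If `g` is measurable with `|g(t)| ≤ C e^{-c/t}` for all `t > 0` and
`∫₀^∞ g(t) t^{-(k+1)} dt = 0` for every integer `k ≥ 1`, then `g = 0` a.e. on `(0,∞)`. -/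
theorem inverse_moments_vanish (C c : ℝ) (hC : 0 < C) (hc : 0 < c) (g : ℝ → ℂ)
    (hmeas : Measurable g)
    (hbound : ∀ t : ℝ, 0 < t → ‖g t‖ ≤ C * Real.exp (-c / t))
    (hvan : ∀ k : ℕ, 1 ≤ k → ∫ t in Ioi (0 : ℝ), g t / (t : ℂ) ^ (k + 1) = 0) :
    ∀ᵐ t ∂(volume.restrict (Ioi (0 : ℝ))), g t = 0 := by
  have hint (n : ℕ) : IntegrableOn (fun t : ℝ ↦ g t / (t : ℂ) ^ (n + 2)) (Ioi 0) := by
    refine ((integrableOn_inv_pow_mul_exp c hc n).const_mul C).mono'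
      (Measurable.aestronglyMeasurable (by fun_prop)) ?_
    filter_upwards [ae_restrict_mem measurableSet_Ioi] with t (ht : 0 < t)
    rw [norm_div, norm_pow, Complex.norm_real, Real.norm_of_nonneg ht.le, ← mul_div_assoc]
    gcongr
    exact hbound t ht
  have hre := ae_eq_zero_of_real hc (u := fun t ↦ (g t).re) (by fun_prop)
    (fun t ht ↦ (Complex.abs_re_le_norm _).trans (hbound t ht)) fun n ↦ by
      have h := Complex.reCLM.integral_comp_comm (hint n)
      rw [hvan (n + 1) (by omega), map_zero] at h
      refine (integral_congr_ae (ae_of_all _ fun t ↦ ?_)).trans h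
      simp [← Complex.ofReal_pow, Complex.div_ofReal_re]
  have him := ae_eq_zero_of_real hc (u := fun t ↦ (g t).im) (by fun_prop)
    (fun t ht ↦ (Complex.abs_im_le_norm _).trans (hbound t ht)) fun n ↦ by
      have h := Complex.imCLM.integral_comp_comm (hint n)
      rw [hvan (n + 1) (by omega), map_zero] at h
      refine (integral_congr_ae (ae_of_all _ fun t ↦ ?_)).trans h
      simp [← Complex.ofReal_pow, Complex.div_ofReal_im]
  filter_upwards [hre, him] with t h1 h2 using Complex.ext h1 h2
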